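/- Let g : ℝ → ℝ be continuous, non-decreasing and everywhere positive, and let C > 0, q ≥ 0, θ > 0 and τ ≥ θq + 1 be constants. Assume the Keller–Osserman condition holds: ∫_b^∞ (∫_0^t g(s) ds)^{-1/(θ+1)} dt = +∞ for every b > 0. Then for every initial value a ≥ 0 there exists an entire solution v : [0,∞) → ℝ of the Cauchy problem (★): v is continuous on [0,∞) with v(0) = a, v is differentiable at 0 from the right with v'(0) = 0, for every r > 0 the derivative v'(r) exists and equals C · r^{-q} · (∫_0^r s^{τ-1} g(v(s)) ds)^{1/θ}, and v'(r) > 0 and v''(r) > 0 for all r > 0. -/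

import Mathlib

open Real MeasureTheory Set Filter Topology ENNReal

/-- The right-hand side of the Cauchy problem (★):
`C · r^{-q} · (∫_0^r s^{τ-1} g(v(s)) ds)^{1/θ}`. -/
noncomputable def cauchyRHS (C q τ θ : ℝ) (g v : ℝ → ℝ) (r : ℝ) : ℝ :=
  C * r ^ (-q) * (∫ s in (0:ℝ)..r, s ^ (τ - 1) * g (v s)) ^ (1 / θ)

/-- `v : ℝ → ℝ` solves the Cauchy problem (★) on `[0, R)` (with `R ∈ (0, ∞]` an
extended nonnegative real): `v` is continuous on `[0, R)`, `v 0 = a`, and at every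
`r ∈ (0, R)` the derivative of `v` exists and is given by `cauchyRHS`. -/
def SolvesCauchy (C q τ θ a : ℝ) (g : ℝ → ℝ) (R : ℝ≥0∞) (v : ℝ → ℝ) : Prop :=
  ContinuousOn v {r : ℝ | 0 ≤ r ∧ ENNReal.ofReal r < R} ∧
  v 0 = a ∧
  ∀ r : ℝ, 0 < r → ENNReal.ofReal r < R → HasDerivAt v (cauchyRHS C q τ θ g v r) r

/-- The Keller–Osserman condition:
`∫_b^∞ (∫_0^t g(s) ds)^{-1/(θ+1)} dt = +∞` for every `b > 0`. -/
def KellerOsserman (θ : ℝ) (g : ℝ → ℝ) : Prop :=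
  ∀ b : ℝ, 0 < b →
    ∫⁻ t in Set.Ioi b, ENNReal.ofReal ((∫ s in (0:ℝ)..t, g s) ^ (-(1 / (θ + 1)))) = ⊤


structure KOHyp (g : ℝ → ℝ) (C q θ τ : ℝ) : Prop where
  cont : Continuous g
  mono : Monotone g
  pos : ∀ t, 0 < g t
  hC : 0 < C
  hq : 0 ≤ q
  hθ : 0 < θ
  hτ : θ * q + 1 ≤ τ

noncomputable def koJ (τ : ℝ) (g u : ℝ → ℝ) (r : ℝ) : ℝ := ∫ s in (0:ℝ)..r, s ^ (τ - 1) * g (u s)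

noncomputable def koK (C q τ θ : ℝ) (g u : ℝ → ℝ) (r : ℝ) : ℝ := cauchyRHS C q τ θ g u (max r 0)

noncomputable def koT (C q τ θ a : ℝ) (g u : ℝ → ℝ) (r : ℝ) : ℝ :=
  a + ∫ s in (0:ℝ)..r, koK C q τ θ g u s

section
variable {g : ℝ → ℝ} {C q θ τ : ℝ}

lemma KOHyp.tau1 (h : KOHyp g C q θ τ) : 0 ≤ τ - 1 := by
  have := mul_nonneg h.hθ.le h.hq
  linarith [h.hτ]

lemma cauchyRHS_eq (u : ℝ → ℝ) (r : ℝ) :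
    cauchyRHS C q τ θ g u r = C * r ^ (-q) * (koJ τ g u r) ^ (1 / θ) := rfl

lemma koJ_int (h : KOHyp g C q θ τ) {u : ℝ → ℝ} (hu : Monotone u) (x y : ℝ) :
    IntervalIntegrable (fun s => s ^ (τ - 1) * g (u s)) volume x y := by
  have h1 : IntervalIntegrable (fun s => g (u s)) volume x y :=
    (h.mono.comp hu).intervalIntegrable
  exact h1.continuousOn_mul (Real.continuous_rpow_const h.tau1).continuousOn

lemma koJ_cont (h : KOHyp g C q θ τ) {u : ℝ → ℝ} (hu : Monotone u) :
    Continuous (koJ τ g u) :=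
  intervalIntegral.continuous_primitive (fun x y => koJ_int h hu x y) 0

lemma koJ_nonneg (h : KOHyp g C q θ τ) (u : ℝ → ℝ) {r : ℝ} (hr : 0 ≤ r) :
    0 ≤ koJ τ g u r :=
  intervalIntegral.integral_nonneg hr
    (fun s hs => mul_nonneg (Real.rpow_nonneg hs.1 _) (h.pos _).le)

lemma koJ_pos (h : KOHyp g C q θ τ) {u : ℝ → ℝ} (hu : Monotone u) {r : ℝ} (hr : 0 < r) :
    0 < koJ τ g u r :=
  intervalIntegral.intervalIntegral_pos_of_pos_on (koJ_int h hu 0 r)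
    (fun s hs => mul_pos (Real.rpow_pos_of_pos hs.1 _) (h.pos _)) hr

lemma koJ_zero (u : ℝ → ℝ) : koJ τ g u 0 = 0 := by simp [koJ]

lemma koJ_mono (h : KOHyp g C q θ τ) {u v : ℝ → ℝ} (hu : Monotone u) (hv : Monotone v)
    (huv : ∀ s, u s ≤ v s) {r : ℝ} (hr : 0 ≤ r) :
    koJ τ g u r ≤ koJ τ g v r :=
  intervalIntegral.integral_mono_on hr (koJ_int h hu 0 r) (koJ_int h hv 0 r)
    (fun s hs => mul_le_mul_of_nonneg_left (h.mono (huv s)) (Real.rpow_nonneg hs.1 _))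

lemma koJ_le (h : KOHyp g C q θ τ) {u : ℝ → ℝ} (hu : Monotone u) {r : ℝ} (hr : 0 ≤ r) :
    koJ τ g u r ≤ g (u r) / τ * r ^ τ := by
  have ht := h.tau1
  have : koJ τ g u r ≤ ∫ s in (0:ℝ)..r, s ^ (τ - 1) * g (u r) := by
    refine intervalIntegral.integral_mono_on hr (koJ_int h hu 0 r) ?_ ?_
    · exact ((Real.continuous_rpow_const ht).mul continuous_const).intervalIntegrable _ _
    · intro s hs
      exact mul_le_mul_of_nonneg_left (h.mono (hu hs.2)) (Real.rpow_nonneg hs.1 _)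
  refine this.trans (le_of_eq ?_)
  rw [intervalIntegral.integral_mul_const, integral_rpow (Or.inl (by linarith))]
  have : τ - 1 + 1 = τ := by ring
  rw [this, Real.zero_rpow (by linarith)]
  ring

lemma cauchyRHS_nonneg (h : KOHyp g C q θ τ) (u : ℝ → ℝ) {r : ℝ} (hr : 0 ≤ r) :
    0 ≤ cauchyRHS C q τ θ g u r :=
  mul_nonneg (mul_nonneg h.hC.le (Real.rpow_nonneg hr _))
    (Real.rpow_nonneg (koJ_nonneg h u hr) _)

lemma cauchyRHS_pos (h : KOHyp g C q θ τ) {u : ℝ → ℝ} (hu : Monotone u) {r : ℝ} (hr : 0 < r) :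
    0 < cauchyRHS C q τ θ g u r :=
  mul_pos (mul_pos h.hC (Real.rpow_pos_of_pos hr _))
    (Real.rpow_pos_of_pos (koJ_pos h hu hr) _)

lemma cauchyRHS_zero (h : KOHyp g C q θ τ) (u : ℝ → ℝ) : cauchyRHS C q τ θ g u 0 = 0 := by
  have := h.hθ
  rw [cauchyRHS_eq, koJ_zero, Real.zero_rpow (one_div_pos.2 this).ne']; simp

lemma cauchyRHS_le (h : KOHyp g C q θ τ) {u : ℝ → ℝ} (hu : Monotone u) {r : ℝ} (hr : 0 ≤ r) :
    cauchyRHS C q τ θ g u r ≤ C * (g (u r) / τ) ^ (1 / θ) * r ^ (τ / θ - q) := by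
  have ht := h.tau1
  have hθ := h.hθ
  have hC := h.hC
  have hg : 0 ≤ g (u r) / τ := div_nonneg (h.pos _).le (by linarith)
  rcases hr.eq_or_lt with rfl | hr'
  · rw [cauchyRHS_zero h]
    exact mul_nonneg (mul_nonneg hC.le (Real.rpow_nonneg hg _)) (Real.rpow_nonneg le_rfl _)
  · have h1 := Real.rpow_le_rpow (koJ_nonneg h u hr) (koJ_le h hu hr) (by positivity : 0 ≤ 1 / θ)
    rw [Real.mul_rpow hg (Real.rpow_nonneg hr _), ← Real.rpow_mul hr] at h1
    rw [cauchyRHS_eq]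
    calc C * r ^ (-q) * koJ τ g u r ^ (1 / θ)
        ≤ C * r ^ (-q) * ((g (u r) / τ) ^ (1 / θ) * r ^ (τ * (1 / θ))) := by gcongr
      _ = C * (g (u r) / τ) ^ (1 / θ) * (r ^ (-q) * r ^ (τ * (1 / θ))) := by ring
      _ = _ := by
        rw [← Real.rpow_add hr']; congr 2; ring

lemma KOHyp.exp_pos (h : KOHyp g C q θ τ) : 0 < τ / θ - q := by
  have hθ := h.hθ
  have : q < τ / θ := by
    rw [lt_div_iff₀ hθ]; nlinarith [h.hτ]
  linarith

lemma koK_cont (h : KOHyp g C q θ τ) {u : ℝ → ℝ} (hu : Monotone u) :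
    Continuous (koK C q τ θ g u) := by
  have hθ := h.hθ
  rw [continuous_iff_continuousAt]
  intro x
  rcases lt_trichotomy x 0 with hx | rfl | hx
  · have : koK C q τ θ g u =ᶠ[𝓝 x] fun _ => 0 := by
      filter_upwards [Iio_mem_nhds hx] with y hy
      rw [koK, max_eq_right (le_of_lt hy), cauchyRHS_zero h]
    exact continuousAt_const.congr this.symm
  · have h0 : koK C q τ θ g u 0 = 0 := by rw [koK, max_self, cauchyRHS_zero h]
    rw [ContinuousAt, h0]
    have hb : Tendsto (fun y : ℝ => C * (g (u 1) / τ) ^ (1 / θ) * (max y 0) ^ (τ / θ - q)) (𝓝 0)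
        (𝓝 0) := by
      have hc : Continuous (fun y : ℝ => C * (g (u 1) / τ) ^ (1 / θ) * (max y 0) ^ (τ / θ - q)) :=
        continuous_const.mul ((Real.continuous_rpow_const h.exp_pos.le).comp
          (continuous_id.max continuous_const))
      have := hc.tendsto 0
      simpa [Real.zero_rpow h.exp_pos.ne'] using this
    refine tendsto_of_tendsto_of_tendsto_of_le_of_le' tendsto_const_nhds hb ?_ ?_
    · exact Eventually.of_forall fun y => cauchyRHS_nonneg h u (le_max_right _ _)
    · filter_upwards [Iio_mem_nhds (zero_lt_one' ℝ)] with y hy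
      refine (cauchyRHS_le h hu (le_max_right _ _)).trans ?_
      have hm : max y 0 ≤ 1 := max_le (le_of_lt hy) zero_le_one
      have h1 := h.mono (hu hm)
      have h2 : 0 ≤ max y 0 := le_max_right _ _
      have h3 := h.hC
      have h4 : 0 < τ := by linarith [h.tau1]
      have h5 := h.pos (u (max y 0))
      gcongr
  · have : koK C q τ θ g u =ᶠ[𝓝 x] cauchyRHS C q τ θ g u := by
      filter_upwards [Ioi_mem_nhds hx] with y hy
      rw [koK, max_eq_left (le_of_lt hy)]
    refine ContinuousAt.congr ?_ this.symm
    refine (continuousAt_const.mul (Real.continuousAt_rpow_const _ _ (Or.inl hx.ne'))).mul ?_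
    exact ((Real.continuous_rpow_const (by positivity)).comp (koJ_cont h hu)).continuousAt

lemma koK_nonneg (h : KOHyp g C q θ τ) (u : ℝ → ℝ) (r : ℝ) : 0 ≤ koK C q τ θ g u r :=
  cauchyRHS_nonneg h u (le_max_right _ _)

lemma koK_of_nonneg (u : ℝ → ℝ) {r : ℝ} (hr : 0 ≤ r) :
    koK C q τ θ g u r = cauchyRHS C q τ θ g u r := by rw [koK, max_eq_left hr]

lemma koK_of_nonpos (h : KOHyp g C q θ τ) (u : ℝ → ℝ) {r : ℝ} (hr : r ≤ 0) :
    koK C q τ θ g u r = 0 := by rw [koK, max_eq_right hr, cauchyRHS_zero h]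

lemma koK_mono (h : KOHyp g C q θ τ) {u v : ℝ → ℝ} (hu : Monotone u) (hv : Monotone v)
    (huv : ∀ s, u s ≤ v s) (r : ℝ) : koK C q τ θ g u r ≤ koK C q τ θ g v r := by
  have h0 : 0 ≤ max r 0 := le_max_right _ _
  have h1 := koJ_mono h hu hv huv h0
  have h2 := koJ_nonneg h u h0
  have h3 := h.hC
  have h4 := h.hθ
  rw [koK, koK, cauchyRHS_eq, cauchyRHS_eq]
  gcongr

lemma koT_deriv (h : KOHyp g C q θ τ) {u : ℝ → ℝ} (hu : Monotone u) (a r : ℝ) :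
    HasDerivAt (koT C q τ θ a g u) (koK C q τ θ g u r) r := by
  have := (koK_cont h hu).integral_hasStrictDerivAt 0 r
  exact this.hasDerivAt.const_add a

lemma koT_cont (h : KOHyp g C q θ τ) {u : ℝ → ℝ} (hu : Monotone u) (a : ℝ) :
    Continuous (koT C q τ θ a g u) :=
  continuous_iff_continuousAt.2 fun r => (koT_deriv h hu a r).continuousAt

lemma koT_monotone (h : KOHyp g C q θ τ) {u : ℝ → ℝ} (hu : Monotone u) (a : ℝ) :
    Monotone (koT C q τ θ a g u) := by
  refine monotone_of_deriv_nonneg (fun r => (koT_deriv h hu a r).differentiableAt) fun r => ?_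
  rw [(koT_deriv h hu a r).deriv]
  exact koK_nonneg h u r

lemma koT_zero (u : ℝ → ℝ) (a : ℝ) : koT C q τ θ a g u 0 = a := by simp [koT]

lemma koT_of_nonpos (h : KOHyp g C q θ τ) (u : ℝ → ℝ) (a : ℝ) {r : ℝ} (hr : r ≤ 0) :
    koT C q τ θ a g u r = a := by
  have : ∫ s in (0:ℝ)..r, koK C q τ θ g u s = ∫ s in (0:ℝ)..r, (0:ℝ) := by
    refine intervalIntegral.integral_congr fun s hs => ?_
    rw [uIcc_of_ge hr] at hs
    exact koK_of_nonpos h u hs.2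
  rw [koT, this]; simp

lemma koT_ge (h : KOHyp g C q θ τ) (u : ℝ → ℝ) (a r : ℝ) :
    a ≤ koT C q τ θ a g u r := by
  rcases le_total r 0 with hr | hr
  · rw [koT_of_nonpos h u a hr]
  · have : 0 ≤ ∫ s in (0:ℝ)..r, koK C q τ θ g u s :=
      intervalIntegral.integral_nonneg hr fun s _ => koK_nonneg h u s
    rw [koT]; linarith

lemma koT_mono (h : KOHyp g C q θ τ) {u v : ℝ → ℝ} (hu : Monotone u) (hv : Monotone v)
    (huv : ∀ s, u s ≤ v s) (a r : ℝ) : koT C q τ θ a g u r ≤ koT C q τ θ a g v r := by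
  rcases le_total r 0 with hr | hr
  · rw [koT_of_nonpos h u a hr, koT_of_nonpos h v a hr]
  · have := intervalIntegral.integral_mono_on (μ := volume) hr
      ((koK_cont h hu).intervalIntegrable 0 r)
      ((koK_cont h hv).intervalIntegrable 0 r) (fun s _ => koK_mono h hu hv huv s)
    rw [koT, koT]; linarith

lemma koJ_deriv (h : KOHyp g C q θ τ) {u : ℝ → ℝ} (hu : Continuous u) (r : ℝ) :
    HasDerivAt (koJ τ g u) (r ^ (τ - 1) * g (u r)) r := by
  have hc : Continuous (fun s => s ^ (τ - 1) * g (u s)) :=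
    (Real.continuous_rpow_const h.tau1).mul (h.cont.comp hu)
  exact (hc.integral_hasStrictDerivAt 0 r).hasDerivAt

/-- energy inequality -/
lemma ko_energy (h : KOHyp g C q θ τ) {u v : ℝ → ℝ} (hu : Monotone u) (huc : Continuous u)
    {a : ℝ} (ha : 0 ≤ a) (hv : v = koT C q τ θ a g u) (huv : ∀ s, u s ≤ v s)
    {r : ℝ} (hr : 0 < r) :
    θ / (θ + 1) * koJ τ g u r ^ ((θ + 1) / θ) ≤
      r ^ (q + τ - 1) / C * ∫ s in (0:ℝ)..(v r), g s := by
  have hθ := h.hθ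
  have hC := h.hC
  have hp : 1 ≤ (θ + 1) / θ := by rw [le_div_iff₀ hθ]; linarith
  have hd : ∀ s : ℝ, HasDerivAt (fun s => r ^ (q + τ - 1) / C * (∫ x in (0:ℝ)..(v s), g x)
      - θ / (θ + 1) * koJ τ g u s ^ ((θ + 1) / θ))
      (r ^ (q + τ - 1) / C * (g (v s) * koK C q τ θ g u s)
      - θ / (θ + 1) * ((s ^ (τ - 1) * g (u s)) * ((θ + 1) / θ) *
        koJ τ g u s ^ ((θ + 1) / θ - 1))) s := by
    intro s
    have h1 : HasDerivAt (fun y => ∫ x in (0:ℝ)..y, g x) (g (v s)) (v s) :=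
      (h.cont.integral_hasStrictDerivAt 0 (v s)).hasDerivAt
    have h2 : HasDerivAt v (koK C q τ θ g u s) s := by rw [hv]; exact koT_deriv h hu a s
    have h3 := h1.comp s h2
    exact (h3.const_mul _).sub (((koJ_deriv h huc s).rpow_const (Or.inr hp)).const_mul _)
  have hm := monotoneOn_of_deriv_nonneg (convex_Icc (0:ℝ) r)
    (fun s _ => (hd s).continuousAt.continuousWithinAt)
    (fun s _ => (hd s).differentiableAt.differentiableWithinAt) (by
      intro s hs
      rw [interior_Icc] at hs
      rw [(hd s).deriv, koK_of_nonneg u hs.1.le, cauchyRHS_eq]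
      have e1 : (θ + 1) / θ - 1 = 1 / θ := by field_simp; ring
      rw [e1]
      have hJ : 0 ≤ koJ τ g u s ^ (1 / θ) := Real.rpow_nonneg (koJ_nonneg h u hs.1.le) _
      have e2 : r ^ (q + τ - 1) / C * (g (v s) * (C * s ^ (-q) * koJ τ g u s ^ (1 / θ))) -
        θ / (θ + 1) * (s ^ (τ - 1) * g (u s) * ((θ + 1) / θ) * koJ τ g u s ^ (1 / θ))
        = koJ τ g u s ^ (1 / θ) * (r ^ (q + τ - 1) * s ^ (-q) * g (v s) - s ^ (τ - 1) * g (u s)) := by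
        field_simp
      rw [e2]
      refine mul_nonneg hJ (sub_nonneg.2 ?_)
      have h1 : s ^ (τ - 1) ≤ r ^ (q + τ - 1) * s ^ (-q) := by
        have : s ^ (τ - 1) = s ^ (q + τ - 1) * s ^ (-q) := by
          rw [← Real.rpow_add hs.1]; congr 1; ring
        rw [this]
        have hs0 := hs.1
        have hsr := hs.2
        have : 0 ≤ q + τ - 1 := by linarith [h.hq, h.tau1]
        gcongr
      have hs0 := hs.1
      have h5 := h.pos (u s)
      exact mul_le_mul h1 (h.mono (huv s)) h5.le (by positivity))
  have h0 := hm (left_mem_Icc.2 hr.le) (right_mem_Icc.2 hr.le) hr.le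
  have hv0 : v 0 = a := by rw [hv, koT_zero]
  have hGa : 0 ≤ ∫ x in (0:ℝ)..a, g x := intervalIntegral.integral_nonneg ha fun s _ => (h.pos s).le
  have hz : (0:ℝ) ^ ((θ + 1) / θ) = 0 := Real.zero_rpow (by positivity)
  simp only [hv0, koJ_zero, hz, mul_zero, sub_zero] at h0
  have : 0 ≤ r ^ (q + τ - 1) / C * ∫ x in (0:ℝ)..a, g x := by positivity
  linarith

lemma ko_slope (h : KOHyp g C q θ τ) {u v : ℝ → ℝ} (hu : Monotone u) (huc : Continuous u)
    {a : ℝ} (ha : 0 ≤ a) (hv : v = koT C q τ θ a g u) (huv : ∀ s, u s ≤ v s)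
    {r R : ℝ} (hr : 0 < r) (hrR : r ≤ R) :
    koK C q τ θ g u r ≤
      (C * ((θ + 1) / (θ * C)) ^ (1 / (θ + 1)) * R ^ ((q + τ - 1) / (θ + 1) - q)) *
        (∫ s in (0:ℝ)..(v r), g s) ^ (1 / (θ + 1)) := by
  have hθ := h.hθ
  have hC := h.hC
  have hE := ko_energy h hu huc ha hv huv hr
  have hJ := koJ_nonneg h u hr.le
  have hva : a ≤ v r := by rw [hv]; exact koT_ge h u a r
  have hG : 0 ≤ ∫ s in (0:ℝ)..(v r), g s :=
    intervalIntegral.integral_nonneg (ha.trans hva) fun s _ => (h.pos s).le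
  set G := ∫ s in (0:ℝ)..(v r), g s
  set J := koJ τ g u r with hJdef
  have h1 : J ^ ((θ + 1) / θ) ≤ (θ + 1) / (θ * C) * (r ^ (q + τ - 1) * G) := by
    have : J ^ ((θ + 1) / θ) = (θ + 1) / θ * (θ / (θ + 1) * J ^ ((θ + 1) / θ)) := by
      field_simp
    rw [this]
    calc _ ≤ (θ + 1) / θ * (r ^ (q + τ - 1) / C * G) := by gcongr
      _ = _ := by field_simp
  have h2 := Real.rpow_le_rpow (by positivity) h1 (by positivity : 0 ≤ 1 / (θ + 1))
  have hrp : 0 ≤ r ^ (q + τ - 1) := Real.rpow_nonneg hr.le _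
  rw [← Real.rpow_mul hJ, Real.mul_rpow (by positivity) (by positivity),
    Real.mul_rpow hrp hG, ← Real.rpow_mul hr.le] at h2
  have e1 : (θ + 1) / θ * (1 / (θ + 1)) = 1 / θ := by field_simp
  rw [e1] at h2
  have he : 0 ≤ (q + τ - 1) / (θ + 1) - q := by
    rw [sub_nonneg, le_div_iff₀ (by positivity)]
    linarith [h.hτ]
  rw [koK_of_nonneg u hr.le, cauchyRHS_eq, ← hJdef]
  calc C * r ^ (-q) * J ^ (1 / θ) ≤ C * r ^ (-q) * (((θ + 1) / (θ * C)) ^ (1 / (θ + 1)) *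
        (r ^ ((q + τ - 1) * (1 / (θ + 1))) * G ^ (1 / (θ + 1)))) := by gcongr
    _ = (C * ((θ + 1) / (θ * C)) ^ (1 / (θ + 1)) *
        (r ^ (-q) * r ^ ((q + τ - 1) * (1 / (θ + 1))))) * G ^ (1 / (θ + 1)) := by ring
    _ = (C * ((θ + 1) / (θ * C)) ^ (1 / (θ + 1)) * r ^ ((q + τ - 1) / (θ + 1) - q))
        * G ^ (1 / (θ + 1)) := by
        rw [← Real.rpow_add hr]; congr 3; ring
    _ ≤ _ := by gcongr

lemma ko_bound (h : KOHyp g C q θ τ) (hKO : KellerOsserman θ g) {a : ℝ} (ha : 0 ≤ a) (R : ℝ) :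
    ∃ M : ℝ, ∀ u : ℝ → ℝ, Monotone u → Continuous u → (∀ s, u s ≤ koT C q τ θ a g u s) →
      koT C q τ θ a g u R ≤ M := by
  have hθ := h.hθ
  rcases le_or_gt R 0 with hR | hR
  · exact ⟨a, fun u _ _ _ => (koT_of_nonpos h u a hR).le⟩
  set G : ℝ → ℝ := fun t => ∫ s in (0:ℝ)..t, g s with hGdef
  have hGc : Continuous G :=
    intervalIntegral.continuous_primitive (fun x y => h.cont.intervalIntegrable x y) 0
  have hGpos : ∀ t, 0 < t → 0 < G t := fun t ht =>
    intervalIntegral.intervalIntegral_pos_of_pos (h.cont.intervalIntegrable 0 t) h.pos ht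
  have hGm : Monotone G := by
    refine monotone_of_deriv_nonneg (fun t => (h.cont.integral_hasStrictDerivAt 0 t).hasDerivAt.differentiableAt) fun t => ?_
    rw [(h.cont.integral_hasStrictDerivAt 0 t).hasDerivAt.deriv]
    exact (h.pos t).le
  set H : ℝ → ℝ := fun t => G (max t (a + 1)) ^ (-(1 / (θ + 1))) with hHdef
  have hmpos : ∀ t : ℝ, 0 < G (max t (a + 1)) := fun t =>
    hGpos _ (lt_of_lt_of_le (by linarith) (le_max_right _ _))
  have hHpos : ∀ t, 0 < H t := fun t => Real.rpow_pos_of_pos (hmpos t) _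
  have hHc : Continuous H :=
    (hGc.comp (continuous_id.max continuous_const)).rpow_const fun t => Or.inl (hmpos t).ne'
  set Φ : ℝ → ℝ := fun x => ∫ t in a..x, H t with hΦdef
  have hΦd : ∀ x, HasDerivAt Φ (H x) x := fun x =>
    (hHc.integral_hasStrictDerivAt a x).hasDerivAt
  have hΦm : StrictMono Φ := strictMono_of_deriv_pos fun x => by
    rw [(hΦd x).deriv]; exact hHpos x
  have hunb : ∀ B : ℝ, ∃ M, B < Φ M := by
    intro B
    by_contra hB
    push Not at hB
    have hint : IntegrableOn H (Ioi a) := by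
      refine integrableOn_Ioi_of_intervalIntegral_norm_bounded (l := atTop) (b := id) B a
        (fun i => (hHc.integrableOn_Icc (a := a) (b := id i)).mono_set Ioc_subset_Icc_self)
        tendsto_id ?_
      refine Eventually.of_forall fun x => ?_
      have : (fun t => ‖H t‖) = H := funext fun t => by rw [Real.norm_of_nonneg (hHpos t).le]
      simp only [this]
      exact hB x
    have hint2 : IntegrableOn H (Ioi (a + 1)) :=
      hint.mono_set (Ioi_subset_Ioi (by linarith))
    have h1 := hKO (a + 1) (by linarith)
    have h2 : ∫⁻ t in Ioi (a + 1), ENNReal.ofReal (H t) < ⊤ := by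
      have := hint2.hasFiniteIntegral
      rw [hasFiniteIntegral_iff_ofReal (Eventually.of_forall fun t => (hHpos t).le)] at this
      exact this
    have h3 : ∫⁻ t in Ioi (a + 1), ENNReal.ofReal (H t) =
        ∫⁻ t in Ioi (a + 1), ENNReal.ofReal ((∫ s in (0:ℝ)..t, g s) ^ (-(1 / (θ + 1)))) := by
      refine setLIntegral_congr_fun measurableSet_Ioi fun t ht => ?_
      simp only [hHdef, hGdef]
      rw [max_eq_left (le_of_lt ht)]
    rw [h3, h1] at h2
    exact lt_irrefl _ h2
  set L : ℝ := C * ((θ + 1) / (θ * C)) ^ (1 / (θ + 1)) * R ^ ((q + τ - 1) / (θ + 1) - q) with hL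
  have hL0 : 0 ≤ L := by have := h.hC; positivity
  obtain ⟨M, hM⟩ := hunb (L * R)
  refine ⟨M, fun u hu huc huv => ?_⟩
  set v := koT C q τ θ a g u with hv
  have hvd : ∀ s, HasDerivAt v (koK C q τ θ g u s) s := fun s => koT_deriv h hu a s
  have hd : ∀ s, HasDerivAt (fun s => L * s - Φ (v s)) (L * 1 - H (v s) * koK C q τ θ g u s) s :=
    fun s => ((hasDerivAt_id s).const_mul L).sub ((hΦd (v s)).comp s (hvd s))
  have hm := monotoneOn_of_deriv_nonneg (convex_Icc (0:ℝ) R)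
    (fun s _ => (hd s).continuousAt.continuousWithinAt)
    (fun s _ => (hd s).differentiableAt.differentiableWithinAt) (by
      intro s hs
      rw [interior_Icc] at hs
      rw [(hd s).deriv]
      have h1 := ko_slope h hu huc ha hv huv hs.1 hs.2.le
      have hva : a ≤ v s := koT_ge h u a s
      have h0 : 0 ≤ G (v s) :=
        intervalIntegral.integral_nonneg (ha.trans hva) fun s _ => (h.pos s).le
      have h2 : G (v s) ^ (1 / (θ + 1)) ≤ G (max (v s) (a + 1)) ^ (1 / (θ + 1)) :=
        Real.rpow_le_rpow h0 (hGm (le_max_left _ _)) (by positivity)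
      have h3 : koK C q τ θ g u s ≤ L * G (max (v s) (a + 1)) ^ (1 / (θ + 1)) :=
        h1.trans (mul_le_mul_of_nonneg_left h2 hL0)
      have h4 : H (v s) * G (max (v s) (a + 1)) ^ (1 / (θ + 1)) = 1 := by
        simp only [hHdef]
        rw [← Real.rpow_add (hmpos _)]; simp
      have h5 := mul_le_mul_of_nonneg_left h3 (hHpos (v s)).le
      have h6 : H (v s) * (L * G (max (v s) (a + 1)) ^ (1 / (θ + 1))) = L := by
        linear_combination L * h4
      linarith)
  have h0 := hm (left_mem_Icc.2 hR.le) (right_mem_Icc.2 hR.le) hR.le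
  have hv0 : v 0 = a := koT_zero u a
  have hΦa : Φ a = 0 := by simp [hΦdef]
  simp only [hv0, hΦa, mul_zero, sub_zero] at h0
  exact (hΦm.lt_iff_lt.1 (show Φ (v R) < Φ M by linarith)).le

lemma ko_fixed (h : KOHyp g C q θ τ) (hKO : KellerOsserman θ g) {a : ℝ} (ha : 0 ≤ a) :
    ∃ v : ℝ → ℝ, Monotone v ∧ koT C q τ θ a g v = v := by
  have hθ := h.hθ
  set w : ℕ → ℝ → ℝ := fun n => (koT C q τ θ a g)^[n] (fun _ => a) with hw
  have hw1 : ∀ n, w (n + 1) = koT C q τ θ a g (w n) := fun n => by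
    simp only [hw, Function.iterate_succ_apply']
  have hmc : ∀ n, Monotone (w n) ∧ Continuous (w n) := by
    intro n
    induction n with
    | zero => exact ⟨monotone_const, continuous_const⟩
    | succ n ih => rw [hw1]; exact ⟨koT_monotone h ih.1 a, koT_cont h ih.1 a⟩
  have hstep : ∀ n s, w n s ≤ w (n + 1) s := by
    intro n
    induction n with
    | zero => intro s; rw [hw1]; exact koT_ge h _ a s
    | succ n ih =>
      intro s
      rw [hw1 (n + 1)]
      nth_rewrite 1 [hw1 n]
      exact koT_mono h (hmc n).1 (hmc (n + 1)).1 ih a s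
  have hbdd : ∀ r, BddAbove (range fun n => w n r) := by
    intro r
    obtain ⟨M, hM⟩ := ko_bound h hKO ha r
    refine ⟨M, ?_⟩
    rintro _ ⟨n, rfl⟩
    refine (hstep n r).trans ?_
    rw [hw1]
    exact hM _ (hmc n).1 (hmc n).2 fun s => by rw [← hw1]; exact hstep n s
  have hmn : ∀ r, Monotone fun n => w n r := fun r => monotone_nat_of_le_succ fun n => hstep n r
  set v : ℝ → ℝ := fun r => ⨆ n, w n r with hv
  have hlim : ∀ r, Tendsto (fun n => w n r) atTop (𝓝 (v r)) := fun r =>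
    tendsto_atTop_ciSup (hmn r) (hbdd r)
  have hle : ∀ n r, w n r ≤ v r := fun n r => le_ciSup (hbdd r) n
  have hvm : Monotone v := fun x y hxy =>
    ciSup_le fun n => ((hmc n).1 hxy).trans (hle n y)
  refine ⟨v, hvm, ?_⟩
  have hJ : ∀ r, 0 ≤ r → Tendsto (fun n => koJ τ g (w n) r) atTop (𝓝 (koJ τ g v r)) := by
    intro r hr
    refine intervalIntegral.tendsto_integral_filter_of_dominated_convergence
      (fun s => s ^ (τ - 1) * g (v s)) ?_ ?_ (koJ_int h hvm 0 r) ?_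
    · exact Eventually.of_forall fun n =>
        ((Real.continuous_rpow_const h.tau1).mul (h.cont.comp (hmc n).2)).aestronglyMeasurable
    · refine Eventually.of_forall fun n => Eventually.of_forall fun s hs => ?_
      rw [uIoc_of_le hr] at hs
      have h1 : 0 ≤ s ^ (τ - 1) := Real.rpow_nonneg hs.1.le _
      rw [Real.norm_of_nonneg (mul_nonneg h1 (h.pos _).le)]
      exact mul_le_mul_of_nonneg_left (h.mono (hle n s)) h1
    · refine Eventually.of_forall fun s _ => ?_
      exact ((h.cont.tendsto _).comp (hlim s)).const_mul _
  have hK : ∀ r, Tendsto (fun n => koK C q τ θ g (w n) r) atTop (𝓝 (koK C q τ θ g v r)) := by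
    intro r
    have h1 := hJ (max r 0) (le_max_right _ _)
    have h2 := ((Real.continuous_rpow_const (by positivity : 0 ≤ 1 / θ)).tendsto _).comp h1
    exact h2.const_mul _
  funext r
  have h1 : Tendsto (fun n => koT C q τ θ a g (w n) r) atTop (𝓝 (koT C q τ θ a g v r)) := by
    refine Tendsto.const_add a ?_
    refine intervalIntegral.tendsto_integral_filter_of_dominated_convergence
      (koK C q τ θ g v) ?_ ?_ ((koK_cont h hvm).intervalIntegrable 0 r) ?_
    · exact Eventually.of_forall fun n => (koK_cont h (hmc n).1).aestronglyMeasurable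
    · refine Eventually.of_forall fun n => Eventually.of_forall fun s _ => ?_
      rw [Real.norm_of_nonneg (koK_nonneg h _ _)]
      exact koK_mono h (hmc n).1 hvm (hle n) s
    · exact Eventually.of_forall fun s _ => hK s
  have h2 : Tendsto (fun n => w (n + 1) r) atTop (𝓝 (v r)) :=
    (hlim r).comp (tendsto_add_atTop_nat 1)
  simp only [hw1] at h2
  exact tendsto_nhds_unique h1 h2

lemma ko_second (h : KOHyp g C q θ τ) {v : ℝ → ℝ} (hvm : Monotone v) (hvc : Continuous v)
    {r : ℝ} (hr : 0 < r) : ∃ d, 0 < d ∧ HasDerivAt (cauchyRHS C q τ θ g v) d r := by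
  have hθ := h.hθ
  have hC := h.hC
  have hJ := koJ_pos h hvm hr
  have hτ0 : 0 < τ := by linarith [h.tau1]
  have h1 : HasDerivAt (fun x : ℝ => C * x ^ (-q)) (C * (-q * r ^ (-q - 1))) r :=
    (Real.hasDerivAt_rpow_const (Or.inl hr.ne')).const_mul C
  have h2 := (koJ_deriv h hvc r).rpow_const (p := 1 / θ) (Or.inl hJ.ne')
  refine ⟨_, ?_, h1.mul h2⟩
  have hle := koJ_le h hvm hr.le
  have e1 : r ^ (-q - 1) = r ^ (-q) / r := by rw [Real.rpow_sub hr, Real.rpow_one]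
  have e2 : koJ τ g v r ^ (1 / θ) = koJ τ g v r * koJ τ g v r ^ (1 / θ - 1) := by
    rw [Real.rpow_sub hJ, Real.rpow_one]; field_simp
  have e3 : r ^ τ = r * r ^ (τ - 1) := by
    rw [Real.rpow_sub hr, Real.rpow_one]; field_simp
  have hX : 0 < koJ τ g v r ^ (1 / θ - 1) := Real.rpow_pos_of_pos hJ _
  have hY : 0 < r ^ (-q) := Real.rpow_pos_of_pos hr _
  have hZ : 0 < r ^ (τ - 1) := Real.rpow_pos_of_pos hr _
  have hg := h.pos (v r)
  have key : 0 < r ^ (τ - 1) * g (v r) * (1 / θ) - q * (koJ τ g v r / r) := by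
    have k1 : koJ τ g v r / r ≤ g (v r) / τ * r ^ (τ - 1) := by
      rw [div_le_iff₀ hr]
      calc _ ≤ _ := hle
        _ = _ := by rw [e3]; ring
    have k2 : q * (koJ τ g v r / r) ≤ q * (g (v r) / τ * r ^ (τ - 1)) :=
      mul_le_mul_of_nonneg_left k1 h.hq
    have k3 : q / τ < 1 / θ := by
      rw [div_lt_div_iff₀ hτ0 hθ]; linarith [h.hτ]
    have k4 : q * (g (v r) / τ * r ^ (τ - 1)) = (r ^ (τ - 1) * g (v r)) * (q / τ) := by ring
    have k5 := mul_lt_mul_of_pos_left k3 (mul_pos hZ hg)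
    linarith
  have : 0 < C * r ^ (-q) * koJ τ g v r ^ (1 / θ - 1) *
      (r ^ (τ - 1) * g (v r) * (1 / θ) - q * (koJ τ g v r / r)) := by positivity
  refine this.trans_eq ?_
  change _ = C * (-q * r ^ (-q - 1)) * koJ τ g v r ^ (1 / θ) + _
  rw [e1, e2]
  ring

end

/-- Sufficiency direction of Theorem 1.2: if `τ ≥ θq + 1` and the Keller–Osserman
condition holds, then for every initial value `a ≥ 0` the Cauchy problem (★) has an
entire solution on `[0, ∞)` with `v'(0) = 0` (right derivative) and `v' > 0`,
`v'' > 0` on `(0, ∞)`. -/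
theorem entire_existence_of_KO
    (g : ℝ → ℝ) (hg_cont : Continuous g) (hg_mono : Monotone g) (hg_pos : ∀ t, 0 < g t)
    (C q θ τ : ℝ) (hC : 0 < C) (hq : 0 ≤ q) (hθ : 0 < θ) (hτ : θ * q + 1 ≤ τ)
    (hKO : KellerOsserman θ g) :
    ∀ a : ℝ, 0 ≤ a → ∃ v : ℝ → ℝ,
      SolvesCauchy C q τ θ a g ⊤ v ∧
      HasDerivWithinAt v 0 (Set.Ici 0) 0 ∧
      ∀ r : ℝ, 0 < r →
        0 < deriv v r ∧ DifferentiableAt ℝ (deriv v) r ∧ 0 < deriv (deriv v) r := by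
  intro a ha
  have h : KOHyp g C q θ τ := ⟨hg_cont, hg_mono, hg_pos, hC, hq, hθ, hτ⟩
  obtain ⟨v, hvm, hv⟩ := ko_fixed h hKO ha
  have hd : ∀ r, HasDerivAt v (koK C q τ θ g v r) r := fun r => by
    have := koT_deriv h hvm a r
    rwa [hv] at this
  have hvc : Continuous v := continuous_iff_continuousAt.2 fun r => (hd r).continuousAt
  have hd' : ∀ r, 0 < r → HasDerivAt v (cauchyRHS C q τ θ g v r) r := fun r hr => by
    rw [← koK_of_nonneg v hr.le]; exact hd r
  refine ⟨v, ⟨hvc.continuousOn, ?_, fun r hr _ => hd' r hr⟩, ?_, fun r hr => ?_⟩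
  · rw [← hv]; exact koT_zero v a
  · have := hd 0
    rw [koK_of_nonpos h v le_rfl] at this
    exact this.hasDerivWithinAt
  · obtain ⟨d, hd0, hdd⟩ := ko_second h hvm hvc hr
    have he : deriv v =ᶠ[𝓝 r] cauchyRHS C q τ θ g v := by
      filter_upwards [Ioi_mem_nhds hr] with y hy
      exact (hd' y hy).deriv
    have hdd' := hdd.congr_of_eventuallyEq he
    refine ⟨?_, hdd'.differentiableAt, ?_⟩
    · rw [(hd' r hr).deriv]; exact cauchyRHS_pos h hvm hr
    · rw [hdd'.deriv]; exact hd0
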